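/- arXiv:1312.7510 — 2 statements merged into one kernel-verified Lean document; each statement's English description precedes it below -/
import Mathlib

section
/- Partition of a cell into well-separated clusters: let G = (g₁,…,g_{2^d}) ∈ ℝ^{d×2^d} with columns indexed by 𝒵 = {z₁,…,z_{2^d}}, and let C > 0. Then there exists a partition 𝒵 = 𝒵₁ ∪̇ … ∪̇ 𝒵ₙ such that diam{G,𝒵ᵢ} := max{|g_s − g_t| : z_s, z_t ∈ 𝒵ᵢ} ≤ (#𝒵ᵢ/2^d)² C for every i, and d(G;𝒵ᵢ,𝒵ⱼ) := min{|g_s − g_t| : z_s ∈ 𝒵ᵢ, z_t ∈ 𝒵ⱼ} > 2^{−2d} C for all i ≠ j. -/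
open scoped BigOperators

noncomputable section

namespace Cleavage

/-- Euclidean norm on `ℝ^d`. -/
def eunorm {d : ℕ} (v : Fin d → ℝ) : ℝ := Real.sqrt (∑ i, v i ^ 2)

theorem eunorm_eq_dist {d : ℕ} (a b : Fin d → ℝ) :
    eunorm (fun jj => a jj - b jj) = dist (WithLp.toLp 2 a) (WithLp.toLp 2 b) := by
  rw [EuclideanSpace.dist_eq, eunorm]
  simp [Real.dist_eq, sq_abs]

/-- Points joined by a walk with steps at most `ε` are at distance at most `length * ε`. -/
theorem walk_dist_le {V X : Type*} [PseudoMetricSpace X] (G : SimpleGraph V) (f : V → X) (ε : ℝ)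
    (h : ∀ s t, G.Adj s t → dist (f s) (f t) ≤ ε) {s t : V} (p : G.Walk s t) :
    dist (f s) (f t) ≤ p.length * ε := by
  induction p with
  | nil => simp
  | cons hadj p ih =>
    rw [SimpleGraph.Walk.length_cons]
    push_cast
    have h1 := h _ _ hadj
    have h2 := dist_triangle (f _) (f _) (f _) |>.trans (add_le_add h1 ih)
    linarith

/-- Partition of the `2^d` points of a cell into clusters that are
internally of diameter at most `(#𝒵ᵢ/2^d)² C` and mutually separated by more than `2^{-2d} C`. -/
theorem cell_partition_into_separated_clusters
    (d : ℕ) (hd : 1 ≤ d) (g : Fin (2 ^ d) → Fin d → ℝ) (C : ℝ) (hC : 0 < C) :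
    ∃ (n : ℕ) (P : Fin n → Finset (Fin (2 ^ d))),
      (∀ i, (P i).Nonempty) ∧
      (∀ i j, i ≠ j → Disjoint (P i) (P j)) ∧
      (Finset.univ.biUnion P = Finset.univ) ∧
      (∀ i, ∀ s ∈ P i, ∀ t ∈ P i,
        eunorm (fun jj => g s jj - g t jj) ≤ ((P i).card : ℝ) ^ 2 / ((2 : ℝ) ^ d) ^ 2 * C) ∧
      (∀ i j, i ≠ j → ∀ s ∈ P i, ∀ t ∈ P j,
        C / (2 : ℝ) ^ (2 * d) < eunorm (fun jj => g s jj - g t jj)) := by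
  classical
  set ε : ℝ := C / (2 : ℝ) ^ (2 * d) with hε
  have hε0 : 0 < ε := by positivity
  let f : Fin (2 ^ d) → EuclideanSpace ℝ (Fin d) := fun s => WithLp.toLp 2 (g s)
  have hf : ∀ s t, eunorm (fun jj => g s jj - g t jj) = dist (f s) (f t) :=
    fun s t => eunorm_eq_dist _ _
  let G : SimpleGraph (Fin (2 ^ d)) := SimpleGraph.fromRel (fun s t => dist (f s) (f t) ≤ ε)
  have hG : ∀ s t, G.Adj s t → dist (f s) (f t) ≤ ε := by
    intro s t h
    rw [SimpleGraph.fromRel_adj] at h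
    rcases h.2 with h | h
    · exact h
    · rwa [dist_comm]
  have : Finite G.ConnectedComponent := Quot.finite _
  obtain ⟨n, ⟨e⟩⟩ := Finite.exists_equiv_fin G.ConnectedComponent
  refine ⟨n, fun i => Finset.univ.filter (fun s => e (G.connectedComponentMk s) = i),
    ?_, ?_, ?_, ?_, ?_⟩
  · intro i
    obtain ⟨s, hs⟩ := (e.symm i).exists_rep
    refine ⟨s, ?_⟩
    have hs' : G.connectedComponentMk s = e.symm i := hs
    simp [hs']
  · intro i j hij
    rw [Finset.disjoint_left]
    intro s hs ht
    simp only [Finset.mem_filter, Finset.mem_univ, true_and] at hs ht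
    exact hij (hs.symm.trans ht)
  · ext s
    simp
  · intro i s hs t ht
    rw [hf]
    simp only [Finset.mem_filter, Finset.mem_univ, true_and] at hs ht
    have hr : G.Reachable s t :=
      SimpleGraph.ConnectedComponent.exact (e.injective (hs.trans ht.symm))
    obtain ⟨p, hp⟩ := hr.exists_isPath
    have h1 := walk_dist_le G f ε hG p
    set Q := Finset.univ.filter (fun s => e (G.connectedComponentMk s) = i) with hQ
    have hsub : p.support.toFinset ⊆ Q := by
      intro v hv
      rw [List.mem_toFinset] at hv
      have hv' : G.connectedComponentMk s = G.connectedComponentMk v :=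
        SimpleGraph.ConnectedComponent.sound (p.takeUntil v hv).reachable
      simp [hQ, ← hv', hs]
    have hcard := Finset.card_le_card hsub
    rw [List.toFinset_card_of_nodup hp.support_nodup, SimpleGraph.Walk.length_support] at hcard
    have hc : p.length ≤ Q.card ^ 2 := by nlinarith
    have hc' : (p.length : ℝ) ≤ (Q.card : ℝ) ^ 2 := by exact_mod_cast hc
    calc dist (f s) (f t) ≤ p.length * ε := h1
      _ ≤ (Q.card : ℝ) ^ 2 * ε := by gcongr
      _ = _ := by rw [hε, ← pow_mul, mul_comm d 2]; ring
  · intro i j hij s hs t ht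
    rw [hf]
    simp only [Finset.mem_filter, Finset.mem_univ, true_and] at hs ht
    by_contra hcon
    apply hij
    rw [← hs, ← ht]
    congr 1
    apply SimpleGraph.ConnectedComponent.sound
    by_cases hst : s = t
    · rw [hst]
    · exact SimpleGraph.Adj.reachable
        ((SimpleGraph.fromRel_adj _ _ _).2 ⟨hst, Or.inl (not_lt.1 hcon)⟩)

end Cleavage
end
end

section
/- Geodesic distance bound: let d ≥ 2 and s = (3d−1)/(3d). There is a constant C > 0 (depending only on d, D, D') such that for all admissible pairs (W̃, W) of subsets of (0,1)^{d−1} and all sufficiently small ε > 0, dist_{W̃}(p,q) ≤ C(1 + ε^{(s−1)(d−3)}) for all p, q ∈ W, where dist_{W̃}(p,q) denotes the infimum of the lengths of Lipschitz curves in W̃ connecting p and q. -/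
open scoped ENNReal
open Set MeasureTheory

noncomputable section

namespace Cleavage

abbrev Epc (d : ℕ) := EuclideanSpace ℝ (Fin d)

/-- the geodesic distance in `S`: the infimum of the lengths (total variations) of Lipschitz
curves in `S` joining `p` and `q`. -/
def geoDist {d : ℕ} (S : Set (Epc d)) (p q : Epc d) : ℝ≥0∞ :=
  sInf {ℓ : ℝ≥0∞ | ∃ γ : ℝ → Epc d, (∃ K : NNReal, LipschitzOnWith K γ (Icc 0 1)) ∧
    γ 0 = p ∧ γ 1 = q ∧ MapsTo γ (Icc 0 1) S ∧ ℓ = eVariationOn γ (Icc 0 1)}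

/-- the mesoscopic exponent `s = (3d-1)/(3d)`. -/
def sExp (d : ℕ) : ℝ := (3 * d - 1) / (3 * d)

/-- the condition (W form): a connected subset of `(0,1)^{d-1}` of `H^{d-1}`-measure in
`(1/2, 1]` whose boundary has `H^{d-2}`-measure `< D`. -/
def WForm (d : ℕ) (D : ℝ) (S : Set (Epc (d - 1))) : Prop :=
  (∀ x ∈ S, ∀ i, x i ∈ Ioo (0 : ℝ) 1) ∧ IsConnected S ∧
    1 / 2 < (μH[(d : ℝ) - 1] S).toReal ∧ μH[(d : ℝ) - 1] S ≤ 1 ∧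
    μH[(d : ℝ) - 2] (frontier S) < ENNReal.ofReal D

/-- the subset of `W̃` of points of distance `> D'ε^{1-s}` from `∂W̃`. -/
def coreSet (d : ℕ) (D' ε : ℝ) (Wt : Set (Epc (d - 1))) : Set (Epc (d - 1)) :=
  {x ∈ Wt | D' * ε ^ (1 - sExp d) < Metric.infDist x (frontier Wt)}

/-- the admissible pairs `(W̃, W)`: `W̃` of the form (W form), and `W` the connected component
of `{x ∈ W̃ : dist(x,∂W̃) > D'ε^{1-s}}` of largest measure, again of the form (W form). -/
def Admissible (d : ℕ) (D D' ε : ℝ) (Wt W : Set (Epc (d - 1))) : Prop :=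
  WForm d D Wt ∧
    (∃ x₀ ∈ coreSet d D' ε Wt, W = connectedComponentIn (coreSet d D' ε Wt) x₀ ∧
      ∀ x ∈ coreSet d D' ε Wt,
        μH[(d : ℝ) - 1] (connectedComponentIn (coreSet d D' ε Wt) x) ≤ μH[(d : ℝ) - 1] W) ∧
    WForm d D W

/-- lattice graph with blocked edges -/
def latG {n : ℕ} (B : Set ((Fin n → ℤ) × Fin n)) : SimpleGraph (Fin n → ℤ) where
  Adj x y := ∃ i, (y = x + Pi.single i 1 ∧ (x, i) ∉ B) ∨ (x = y + Pi.single i 1 ∧ (y, i) ∉ B)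
  symm := ⟨by
    rintro x y ⟨i, h | h⟩
    · exact ⟨i, Or.inr h⟩
    · exact ⟨i, Or.inl h⟩⟩
  loopless := ⟨by
    rintro x ⟨i, h | h⟩ <;>
    · have := congrFun h.1 i
      simp at this⟩

section key
variable {n : ℕ} (B : Set ((Fin n → ℤ) × Fin n)) (u : Fin n → ℤ) (k : ℕ)

open Classical in
def gInd (x : Fin n → ℤ) : ℤ := if k < (latG B).dist u x then 1 else 0

open Classical in
def phi (i : Fin n) (x : Fin n → ℤ) : ℤ :=
  if (x, i) ∉ B ∧ (latG B).Reachable u x then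
    gInd B u k (x + Pi.single i 1) - gInd B u k x else 0

def psi (i0 : Fin n) (R : ℤ) (x : Fin n → ℤ) : ℤ :=
  ∑ s ∈ Finset.Ico (x i0) R, phi B u k i0 (Function.update x i0 s)

variable {B u k}

lemma adj_step {x : Fin n → ℤ} {i : Fin n} (h : (x, i) ∉ B) :
    (latG B).Adj x (x + Pi.single i 1) := ⟨i, Or.inl ⟨rfl, h⟩⟩

lemma dist_adj_le {x y : Fin n → ℤ} (hx : (latG B).Reachable u x) (h : (latG B).Adj x y) :
    (latG B).dist u y ≤ (latG B).dist u x + 1 := by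
  obtain ⟨p, hp⟩ := hx.exists_walk_length_eq_dist
  have := SimpleGraph.dist_le (p.concat h)
  rw [SimpleGraph.Walk.length_concat, hp] at this
  exact this

lemma phi_ne {i : Fin n} {x : Fin n → ℤ} (h : phi B u k i x ≠ 0) :
    (latG B).Reachable u x ∧ (latG B).Reachable u (x + Pi.single i 1) ∧
      ((latG B).dist u x = k ∨ (latG B).dist u (x + Pi.single i 1) = k) := by
  unfold phi at h
  split_ifs at h with h1
  · have ha := adj_step h1.1
    have h2 : (latG B).Reachable u (x + Pi.single i 1) := h1.2.trans ha.reachable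
    refine ⟨h1.2, h2, ?_⟩
    have d1 := dist_adj_le h1.2 ha
    have d2 := dist_adj_le h2 ha.symm
    unfold gInd at h
    split_ifs at h <;> omega
  · exact absurd rfl h

lemma phi_eq {i : Fin n} {x : Fin n → ℤ} (h : (x, i) ∉ B) (hx : (latG B).Reachable u x) :
    phi B u k i x = gInd B u k (x + Pi.single i 1) - gInd B u k x := by
  unfold phi
  rw [if_pos ⟨h, hx⟩]

/-- goodness of a level -/
def GoodLev (B : Set ((Fin n → ℤ) × Fin n)) (u : Fin n → ℤ) (k : ℕ) : Prop :=
  ∀ x, (latG B).Reachable u x → (latG B).dist u x = k →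
    ∀ z i, (∀ l, |x l - z l| ≤ 1) → (z, i) ∉ B

lemma single_bd (i l : Fin n) : (Pi.single i (1 : ℤ) : Fin n → ℤ) l = 0 ∨
    (Pi.single i (1 : ℤ) : Fin n → ℤ) l = 1 := by
  by_cases h : l = i
  · subst h; simp
  · simp [h]

lemma single_bd2 {i j : Fin n} (hij : i ≠ j) (l : Fin n) :
    (Pi.single i (1 : ℤ) : Fin n → ℤ) l = 0 ∨ (Pi.single j (1 : ℤ) : Fin n → ℤ) l = 0 := by
  by_cases h : l = i
  · subst h; right; simp [hij]
  · left; simp [h]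

lemma phi_closed (hg : GoodLev B u k) {i j : Fin n} (hij : i ≠ j) (x : Fin n → ℤ) :
    phi B u k i x + phi B u k j (x + Pi.single i 1) =
      phi B u k j x + phi B u k i (x + Pi.single j 1) := by
  have comm : x + Pi.single i 1 + Pi.single j 1 = x + Pi.single j 1 + Pi.single i (1:ℤ) := by abel
  by_cases H : ∃ y, (latG B).Reachable u y ∧ (latG B).dist u y = k ∧
      (y = x ∨ y = x + Pi.single i 1 ∨ y = x + Pi.single j 1 ∨
        y = x + Pi.single i 1 + Pi.single j 1)
  · obtain ⟨y, hy, hd, hc⟩ := H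
    have bnd : ∀ z, (z = x ∨ z = x + Pi.single i 1 ∨ z = x + Pi.single j 1) →
        ∀ l, |y l - z l| ≤ 1 := by
      intro z hz l
      have a1 := single_bd i l
      have a2 := single_bd j l
      have a3 := single_bd2 hij l
      rw [abs_le]
      rcases hc with rfl | rfl | rfl | rfl <;> rcases hz with rfl | rfl | rfl <;>
        (try simp only [Pi.add_apply]) <;> constructor <;> omega
    have b1 : (x, i) ∉ B := hg y hy hd x i (bnd x (by simp))
    have b2 : (x, j) ∉ B := hg y hy hd x j (bnd x (by simp))
    have b3 : (x + Pi.single i 1, j) ∉ B := hg y hy hd _ j (bnd _ (by simp))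
    have b4 : (x + Pi.single j 1, i) ∉ B := hg y hy hd _ i (bnd _ (by simp))
    have e1 := (adj_step b1).reachable
    have e2 := (adj_step b2).reachable
    have e3 := (adj_step b3).reachable
    have hx : (latG B).Reachable u x := by
      rcases hc with rfl | rfl | rfl | rfl
      · exact hy
      · exact hy.trans e1.symm
      · exact hy.trans e2.symm
      · exact (hy.trans e3.symm).trans e1.symm
    rw [phi_eq b1 hx, phi_eq b2 hx, phi_eq b3 (hx.trans e1), phi_eq b4 (hx.trans e2), comm]
    ring
  · push Not at H
    have z1 : phi B u k i x = 0 := by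
      by_contra h
      obtain ⟨h1, h2, h3 | h3⟩ := phi_ne h
      · exact (H _ h1 h3).1 rfl
      · exact (H _ h2 h3).2.1 rfl
    have z2 : phi B u k j x = 0 := by
      by_contra h
      obtain ⟨h1, h2, h3 | h3⟩ := phi_ne h
      · exact (H _ h1 h3).1 rfl
      · exact (H _ h2 h3).2.2.1 rfl
    have z3 : phi B u k j (x + Pi.single i 1) = 0 := by
      by_contra h
      obtain ⟨h1, h2, h3 | h3⟩ := phi_ne h
      · exact (H _ h1 h3).2.1 rfl
      · exact (H _ h2 h3).2.2.2 rfl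
    have z4 : phi B u k i (x + Pi.single j 1) = 0 := by
      by_contra h
      obtain ⟨h1, h2, h3 | h3⟩ := phi_ne h
      · exact (H _ h1 h3).2.2.1 rfl
      · exact (H _ h2 h3).2.2.2 comm.symm
    rw [z1, z2, z3, z4]

lemma sum_Ico_tele (F : ℤ → ℤ) {a R : ℤ} (h : a ≤ R) :
    ∑ s ∈ Finset.Ico a R, (F (s + 1) - F s) = F R - F a := by
  induction R, h using Int.leInduction with
  | base => simp
  | succ m hm ih =>
    have : Finset.Ico a (m + 1) = insert m (Finset.Ico a m) := by
      ext t; simp; omega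
    rw [this, Finset.sum_insert (by simp), ih]; ring

lemma psi_step (hg : GoodLev B u k) {i0 : Fin n} {R : ℤ}
    (hR : ∀ x, (latG B).Reachable u x → ∀ i, x i < R) (j : Fin n) (x : Fin n → ℤ) :
    psi B u k i0 R (x + Pi.single j 1) = psi B u k i0 R x - phi B u k j x := by
  have far : ∀ y : Fin n → ℤ, ∀ i j, R ≤ y j → phi B u k i y = 0 := by
    intro y i j hy
    by_contra h
    have := hR _ (phi_ne h).1 j
    omega
  by_cases hx : x i0 < R
  · by_cases hj : j = i0
    · subst hj
      unfold psi
      have h1 : Finset.Ico (x j) R = insert (x j) (Finset.Ico ((x + Pi.single j 1 : Fin n → ℤ) j) R) := by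
        ext t; simp; omega
      rw [h1, Finset.sum_insert (by simp)]
      have h2 : ∀ s, Function.update (x + Pi.single j 1) j s = Function.update x j s := by
        intro s; ext l
        by_cases hl : l = j
        · subst hl; simp
        · simp [hl]
      simp only [h2, Function.update_eq_self]
      ring
    · unfold psi
      have h1 : (x + Pi.single j 1 : Fin n → ℤ) i0 = x i0 := by simp [Ne.symm hj]
      rw [h1, eq_sub_iff_add_eq, ← eq_sub_iff_add_eq', ← Finset.sum_sub_distrib]
      have h2 : ∀ s, Function.update (x + Pi.single j 1) i0 s
          = Function.update x i0 s + Pi.single j 1 := by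
        intro s; ext l
        by_cases hl : l = i0
        · subst hl; simp [Ne.symm hj]
        · simp [hl]
      have h3 : ∀ s, Function.update x i0 s + Pi.single i0 1 = Function.update x i0 (s + 1) := by
        intro s; ext l
        by_cases hl : l = i0
        · subst hl; simp
        · simp [hl]
      have h4 : ∀ s, phi B u k i0 (Function.update x i0 s)
          - phi B u k i0 (Function.update (x + Pi.single j 1) i0 s)
          = -(phi B u k j (Function.update x i0 (s + 1))) - -(phi B u k j (Function.update x i0 s)) := by
        intro s
        have := phi_closed hg (Ne.symm hj) (Function.update x i0 s)
        rw [h3] at this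
        rw [h2]
        linarith
      rw [Finset.sum_congr rfl (fun s _ => h4 s),
        sum_Ico_tele (fun s => -(phi B u k j (Function.update x i0 s))) hx.le]
      have h5 := far (Function.update x i0 R) j i0 (by simp)
      simp [h5]
  · push Not at hx
    rw [far x j i0 hx]
    unfold psi
    rw [Finset.Ico_eq_empty, Finset.Ico_eq_empty] <;> simp
    · exact hx
    · have := single_bd j i0
      omega

lemma psi_add_g (hg : GoodLev B u k) {i0 : Fin n} {R : ℤ}
    (hR : ∀ x, (latG B).Reachable u x → ∀ i, x i < R) {x : Fin n → ℤ}
    (hx : (latG B).Reachable u x) :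
    psi B u k i0 R x + gInd B u k x = psi B u k i0 R u + gInd B u k u := by
  obtain ⟨p⟩ := hx
  have key : ∀ (a b : Fin n → ℤ) (p : (latG B).Walk a b), (latG B).Reachable u a →
      psi B u k i0 R b + gInd B u k b = psi B u k i0 R a + gInd B u k a := by
    intro a b p
    induction p with
    | nil => intro _; rfl
    | cons h p ih =>
      intro ha
      rw [ih (ha.trans h.reachable)]
      obtain ⟨i, ⟨rfl, hb⟩ | ⟨rfl, hb⟩⟩ := h
      · rw [psi_step hg hR, phi_eq hb ha]; ring
      · have h' : (latG B).Reachable u _ := ha.trans (adj_step hb).symm.reachable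
        rw [psi_step hg hR, phi_eq hb h']; ring
  exact key _ _ p (SimpleGraph.Reachable.refl _)

/-- `x` sees the level `k` along the line in direction `i`. -/
def Sees (B : Set ((Fin n → ℤ) × Fin n)) (u : Fin n → ℤ) (k : ℕ) (i : Fin n) (x : Fin n → ℤ) : Prop :=
  ∃ y, (latG B).Reachable u y ∧ (latG B).dist u y = k ∧ ∀ l, l ≠ i → y l = x l

lemma psi_sees1 {i0 : Fin n} {R : ℤ} {x : Fin n → ℤ} (h : psi B u k i0 R x ≠ 0) :
    Sees B u k i0 x := by
  obtain ⟨s, -, hs⟩ := Finset.exists_ne_zero_of_sum_ne_zero h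
  obtain ⟨h1, h2, h3 | h3⟩ := phi_ne hs
  · exact ⟨_, h1, h3, fun l hl => by simp [hl]⟩
  · exact ⟨_, h2, h3, fun l hl => by simp [hl]⟩

lemma psi_sees2 (hg : GoodLev B u k) {i0 j0 : Fin n} (hij : i0 ≠ j0) {R : ℤ}
    (hR : ∀ x, (latG B).Reachable u x → ∀ i, x i < R) {x : Fin n → ℤ}
    (h : psi B u k i0 R x ≠ 0) : Sees B u k j0 x := by
  by_contra hc
  have hz : ∀ t : ℕ, psi B u k i0 R (x + (t : ℤ) • Pi.single j0 1) = psi B u k i0 R x := by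
    intro t
    induction t with
    | zero => simp
    | succ t ih =>
      have : x + ((t + 1 : ℕ) : ℤ) • Pi.single j0 (1:ℤ)
          = x + (t : ℤ) • Pi.single j0 1 + Pi.single j0 1 := by
        push_cast; rw [add_smul, one_smul, add_assoc]
      rw [this, psi_step hg hR, ih]
      have : phi B u k j0 (x + (t : ℤ) • Pi.single j0 1) = 0 := by
        by_contra hne
        obtain ⟨h1, h2, h3 | h3⟩ := phi_ne hne
        · exact hc ⟨_, h1, h3, fun l hl => by simp [hl]⟩
        · exact hc ⟨_, h2, h3, fun l hl => by simp [hl]⟩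
      rw [this, sub_zero]
  apply h
  rw [← hz (R - x j0).toNat]
  unfold psi
  apply Finset.sum_eq_zero
  intro s _
  by_contra hne
  have := hR _ (phi_ne hne).1 j0
  simp [Ne.symm hij] at this
  omega

lemma key_dichotomy (hg : GoodLev B u k) {i0 j0 : Fin n} (hij : i0 ≠ j0) {R : ℤ}
    (hR : ∀ x, (latG B).Reachable u x → ∀ i, x i < R) :
    (∀ x, (latG B).Reachable u x → (latG B).dist u x ≤ k → Sees B u k i0 x ∧ Sees B u k j0 x) ∨
    (∀ x, (latG B).Reachable u x → k < (latG B).dist u x → Sees B u k i0 x ∧ Sees B u k j0 x) := by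
  obtain ⟨m, ⟨y, hy, rfl⟩, hm⟩ := Int.exists_greatest_of_bdd
    (P := fun m => ∃ y, (latG B).Reachable u y ∧ y i0 = m)
    ⟨R, by rintro z ⟨y, hy, rfl⟩; exact (hR y hy i0).le⟩ ⟨_, u, SimpleGraph.Reachable.refl _, rfl⟩
  have hy0 : psi B u k i0 R y = 0 := by
    unfold psi
    apply Finset.sum_eq_zero
    intro s hs
    by_contra hne
    have := hm _ ⟨_, (phi_ne hne).2.1, rfl⟩
    simp at this hs
    omega
  have e : ∀ x, (latG B).Reachable u x → psi B u k i0 R x + gInd B u k x = gInd B u k y := by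
    intro x hx
    have h1 := psi_add_g (i0 := i0) hg hR hx
    have h2 := psi_add_g (i0 := i0) hg hR hy
    linarith
  have fin : ∀ x, psi B u k i0 R x ≠ 0 → Sees B u k i0 x ∧ Sees B u k j0 x := fun x h =>
    ⟨psi_sees1 h, psi_sees2 hg hij hR h⟩
  by_cases hk : k < (latG B).dist u y
  · left
    intro x hx hxk
    apply fin
    have := e x hx
    unfold gInd at this
    rw [if_pos hk, if_neg (by omega)] at this
    omega
  · right
    intro x hx hxk
    apply fin
    have := e x hx
    unfold gInd at this
    rw [if_neg hk, if_pos hxk] at this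
    omega

end key
section count
variable {n : ℕ} {B : Set ((Fin n → ℤ) × Fin n)} {u : Fin n → ℤ}

lemma sep_count (T : Finset ℕ) (V : ℕ → ℕ) (M : ℕ) (hM : ∀ k ∈ T, V k ≤ M)
    (h : ∀ k ∈ T, ∀ k' ∈ T, k ≠ k' → ∃ s : ℕ, 1 ≤ s ∧
      ((V k ≤ s ^ 2 ∧ V k + s ≤ V k') ∨ (V k' ≤ s ^ 2 ∧ V k' + s ≤ V k))) :
    (T.card : ℝ) ≤ 3 * √M + 1 := by
  have aux : ∀ a b s : ℕ, 1 ≤ s → a ≤ s ^ 2 → a + s ≤ b → 3 * √(a:ℝ) + 1 ≤ 3 * √(b:ℝ) := by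
    intro a b s h1 h2 h3
    have h1' : (1:ℝ) ≤ s := by exact_mod_cast h1
    have h2' : (a:ℝ) ≤ (s:ℝ) ^ 2 := by exact_mod_cast h2
    have h3' : (a:ℝ) + s ≤ b := by exact_mod_cast h3
    have h4 : √(a:ℝ) ≤ s := Real.sqrt_le_iff.2 ⟨by linarith, h2'⟩
    have h5 : √(a:ℝ) + 1 / 3 ≤ √(b:ℝ) := by
      apply Real.le_sqrt_of_sq_le
      have := Real.sq_sqrt (Nat.cast_nonneg (α := ℝ) a)
      nlinarith
    linarith
  have hcard : T.card ≤ (Finset.range (⌊3 * √(M:ℝ)⌋₊ + 1)).card := by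
    apply Finset.card_le_card_of_injOn (fun k => ⌊3 * √(V k : ℝ)⌋₊)
    · intro k hk
      simp only [Finset.coe_range, mem_Iio, Order.lt_add_one_iff]
      apply Nat.floor_le_floor
      have : (V k : ℝ) ≤ M := by exact_mod_cast hM k hk
      have := Real.sqrt_le_sqrt this
      linarith
    · intro k hk k' hk' he
      by_contra hne
      have ff : ∀ a b : ℝ, 0 ≤ a → a + 1 ≤ b → ⌊a⌋₊ ≠ ⌊b⌋₊ := by
        intro a b h0 hab hf
        have := Nat.floor_le_floor hab
        rw [Nat.floor_add_one h0] at this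
        omega
      obtain ⟨s, hs, ⟨h1, h2⟩ | ⟨h1, h2⟩⟩ := h k hk k' hk' hne
      · exact ff _ _ (by positivity) (aux _ _ s hs h1 h2) he
      · exact ff _ _ (by positivity) (aux _ _ s hs h1 h2) he.symm
  rw [Finset.card_range] at hcard
  have h6 : (T.card : ℝ) ≤ (⌊3 * √(M:ℝ)⌋₊ : ℝ) + 1 := by exact_mod_cast hcard
  have := Nat.floor_le (show 0 ≤ 3 * √(M:ℝ) by positivity)
  linarith

lemma dist_step_exists {v : Fin n → ℤ} (hv : (latG B).Reachable u v) {k : ℕ}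
    (hk : k ≤ (latG B).dist u v) : ∃ y, (latG B).Reachable u y ∧ (latG B).dist u y = k := by
  obtain ⟨p⟩ := hv
  have key : ∀ (a b : Fin n → ℤ) (p : (latG B).Walk a b), (latG B).Reachable u a →
      (latG B).dist u a ≤ k → k ≤ (latG B).dist u b →
      ∃ y, (latG B).Reachable u y ∧ (latG B).dist u y = k := by
    intro a b p
    induction p with
    | nil => intro h1 h2 h3; exact ⟨_, h1, le_antisymm h2 h3⟩
    | @cons a c b h p ih =>
      intro h1 h2 h3
      rcases h2.lt_or_eq with h4 | h4
      · exact ih (h1.trans h.reachable) (by have := dist_adj_le h1 h; omega) h3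
      · exact ⟨_, h1, h4⟩
  exact key _ _ p (SimpleGraph.Reachable.refl _) (by simp) hk

open Classical in
theorem dist_bound (hB : B.Finite) {i0 j0 : Fin n} (hij : i0 ≠ j0) (N : ℕ)
    (hN : ∀ x, (latG B).Reachable u x → ∀ i, 0 ≤ x i ∧ x i < N) {v : Fin n → ℤ}
    (hv : (latG B).Reachable u v) :
    ((latG B).dist u v : ℝ) ≤ 3 ^ n * B.ncard + 2 * (3 * √((N ^ n : ℕ) : ℝ) + 1) := by
  set Gr := latG B with hGr
  set box : Finset (Fin n → ℤ) := Fintype.piFinset fun _ => Finset.Ico 0 (N : ℤ) with hbox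
  have hbc : box.card = N ^ n := by simp [hbox]
  set Gf := box.filter (fun x => Gr.Reachable u x) with hGf
  have memG : ∀ x, x ∈ Gf ↔ Gr.Reachable u x := by
    intro x
    simp only [hGf, Finset.mem_filter, hbox, Fintype.mem_piFinset, Finset.mem_Ico]
    exact ⟨fun h => h.2, fun h => ⟨fun i => hN x h i, h⟩⟩
  have hGc : Gf.card ≤ N ^ n := hbc ▸ Finset.card_filter_le _ _
  set S : ℕ → Finset (Fin n → ℤ) := fun k => Gf.filter (fun x => Gr.dist u x = k) with hS
  set VA : ℕ → Finset (Fin n → ℤ) := fun k => Gf.filter (fun x => Gr.dist u x ≤ k) with hVA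
  set VB : ℕ → Finset (Fin n → ℤ) := fun k => Gf.filter (fun x => k < Gr.dist u x) with hVB
  set m := Gr.dist u v with hm
  have hS1 : ∀ k < m, 1 ≤ (S k).card := by
    intro k hk
    obtain ⟨y, h1, h2⟩ := dist_step_exists hv hk.le
    exact Finset.card_pos.2 ⟨y, by simp only [hS, Finset.mem_filter]; exact ⟨(memG y).2 h1, h2⟩⟩
  have inj : ∀ k (E : Finset (Fin n → ℤ)), (∀ x ∈ E, Sees B u k i0 x ∧ Sees B u k j0 x) →
      E.card ≤ (S k).card ^ 2 := by
    intro k E hE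
    have : ∀ x : E, ∃ y1 y2, (y1 ∈ S k ∧ y2 ∈ S k) ∧ (∀ l, l ≠ i0 → y1 l = x.1 l) ∧
        ∀ l, l ≠ j0 → y2 l = x.1 l := by
      intro x
      obtain ⟨⟨y1, a1, a2, a3⟩, ⟨y2, b1, b2, b3⟩⟩ := hE x.1 x.2
      refine ⟨y1, y2, ⟨?_, ?_⟩, a3, b3⟩
      · simp only [hS, Finset.mem_filter]; exact ⟨(memG _).2 a1, a2⟩
      · simp only [hS, Finset.mem_filter]; exact ⟨(memG _).2 b1, b2⟩
    choose y1 y2 hy h1 h2 using this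
    rw [sq, ← Finset.card_product, ← Finset.card_attach]
    apply Finset.card_le_card_of_injOn (fun x => (y1 x, y2 x))
    · intro x _
      simp only [Finset.coe_product, mem_prod, Finset.mem_coe]
      exact hy x
    · intro x _ x' _ he
      simp only [Prod.mk.injEq] at he
      apply Subtype.ext
      funext l
      by_cases hl : l = i0
      · have : l ≠ j0 := by rw [hl]; exact hij
        rw [← h2 x l this, ← h2 x' l this, he.2]
      · rw [← h1 x l hl, ← h1 x' l hl, he.1]
  set bad := (Finset.range m).filter (fun k => ¬ GoodLev B u k) with hbad
  set TA := (Finset.range m).filter (fun k => (VA k).card ≤ (S k).card ^ 2) with hTA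
  set TB := (Finset.range m).filter (fun k => (VB k).card ≤ (S k).card ^ 2) with hTB
  have cover : Finset.range m ⊆ bad ∪ (TA ∪ TB) := by
    intro k hk
    simp only [Finset.mem_union, hbad, hTA, hTB, Finset.mem_filter]
    by_cases hg : GoodLev B u k
    · right
      rcases key_dichotomy hg hij (R := N) (fun x hx i => (hN x hx i).2) with h | h
      · left
        refine ⟨hk, inj k _ fun x hx => ?_⟩
        simp only [hVA, Finset.mem_filter] at hx
        exact h x ((memG x).1 hx.1) hx.2
      · right
        refine ⟨hk, inj k _ fun x hx => ?_⟩
        simp only [hVB, Finset.mem_filter] at hx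
        exact h x ((memG x).1 hx.1) hx.2
    · exact Or.inl ⟨hk, hg⟩
  have cbad : bad.card ≤ 3 ^ n * B.ncard := by
    set Nb : Finset (Fin n → ℤ) := hB.toFinset.biUnion fun b =>
      Fintype.piFinset fun l => Finset.Icc (b.1 l - 1) (b.1 l + 1) with hNb
    have h1 : bad ⊆ Nb.image (Gr.dist u) := by
      intro k hk
      rw [hbad, Finset.mem_filter] at hk
      have hk2 := hk.2
      unfold GoodLev at hk2
      push Not at hk2
      obtain ⟨x, hx, hd, z, i, hz, hb⟩ := hk2
      refine Finset.mem_image.2 ⟨x, ?_, hd⟩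
      refine Finset.mem_biUnion.2 ⟨(z, i), by simpa using hb, ?_⟩
      rw [Fintype.mem_piFinset]
      intro l
      have := abs_le.1 (hz l)
      rw [Finset.mem_Icc]
      constructor <;> dsimp only <;> omega
    calc bad.card ≤ _ := Finset.card_le_card h1
      _ ≤ Nb.card := Finset.card_image_le
      _ ≤ hB.toFinset.card * 3 ^ n := by
        apply Finset.card_biUnion_le_card_mul
        intro b _
        rw [Fintype.card_piFinset]
        apply le_of_eq
        have : ∀ l : Fin n, (Finset.Icc (b.1 l - 1) (b.1 l + 1)).card = 3 := by
          intro l; rw [Int.card_Icc]; omega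
        simp [this]
      _ = 3 ^ n * B.ncard := by rw [Set.ncard_eq_toFinset_card B hB, mul_comm]
  have memS : ∀ k x, x ∈ S k ↔ x ∈ Gf ∧ Gr.dist u x = k := fun k x => by simp [hS]
  have memA : ∀ k x, x ∈ VA k ↔ x ∈ Gf ∧ Gr.dist u x ≤ k := fun k x => by simp [hVA]
  have memB : ∀ k x, x ∈ VB k ↔ x ∈ Gf ∧ k < Gr.dist u x := fun k x => by simp [hVB]
  have incA : ∀ k k', k < k' → (VA k).card + (S k').card ≤ (VA k').card := by
    intro k k' h
    rw [← Finset.card_union_of_disjoint]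
    · apply Finset.card_le_card
      intro x hx
      rw [Finset.mem_union, memA, memS] at hx
      rw [memA]
      rcases hx with hx | hx
      · exact ⟨hx.1, by omega⟩
      · exact ⟨hx.1, by omega⟩
    · rw [Finset.disjoint_left]
      intro x hx hx'
      rw [memA] at hx
      rw [memS] at hx'
      omega
  have incB : ∀ k k', k < k' → (VB k').card + (S k').card ≤ (VB k).card := by
    intro k k' h
    rw [← Finset.card_union_of_disjoint]
    · apply Finset.card_le_card
      intro x hx
      rw [Finset.mem_union, memB, memS] at hx
      rw [memB]
      rcases hx with hx | hx
      · exact ⟨hx.1, by omega⟩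
      · exact ⟨hx.1, by omega⟩
    · rw [Finset.disjoint_left]
      intro x hx hx'
      rw [memB] at hx
      rw [memS] at hx'
      omega
  have cA : (TA.card : ℝ) ≤ 3 * √((N ^ n : ℕ) : ℝ) + 1 := by
    apply sep_count TA (fun k => (VA k).card)
    · intro k _; exact (Finset.card_filter_le _ _).trans hGc
    · have main : ∀ k ∈ TA, ∀ k' ∈ TA, k < k' → ∃ s : ℕ, 1 ≤ s ∧
          ((VA k).card ≤ s ^ 2 ∧ (VA k).card + s ≤ (VA k').card) := by
        intro k hk k' hk' h
        simp only [hTA, Finset.mem_filter, Finset.mem_range] at hk'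
        refine ⟨(S k').card, hS1 k' hk'.1, ?_, incA k k' h⟩
        have := incA k k' h
        exact le_trans (by omega) hk'.2
      intro k hk k' hk' hne
      rcases lt_or_gt_of_ne hne with h | h
      · obtain ⟨s, h1, h2⟩ := main k hk k' hk' h
        exact ⟨s, h1, Or.inl h2⟩
      · obtain ⟨s, h1, h2⟩ := main k' hk' k hk h
        exact ⟨s, h1, Or.inr h2⟩
  have cB : (TB.card : ℝ) ≤ 3 * √((N ^ n : ℕ) : ℝ) + 1 := by
    apply sep_count TB (fun k => (VB k).card)
    · intro k _; exact (Finset.card_filter_le _ _).trans hGc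
    · have main : ∀ k ∈ TB, ∀ k' ∈ TB, k < k' → ∃ s : ℕ, 1 ≤ s ∧
          ((VB k').card ≤ s ^ 2 ∧ (VB k').card + s ≤ (VB k).card) := by
        intro k hk k' hk' h
        simp only [hTB, Finset.mem_filter, Finset.mem_range] at hk'
        exact ⟨(S k').card, hS1 k' hk'.1, hk'.2, incB k k' h⟩
      intro k hk k' hk' hne
      rcases lt_or_gt_of_ne hne with h | h
      · obtain ⟨s, h1, h2⟩ := main k hk k' hk' h
        exact ⟨s, h1, Or.inr h2⟩
      · obtain ⟨s, h1, h2⟩ := main k' hk' k hk h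
        exact ⟨s, h1, Or.inl h2⟩
  have tot : m ≤ bad.card + (TA.card + TB.card) := by
    calc m = (Finset.range m).card := by simp
      _ ≤ _ := Finset.card_le_card cover
      _ ≤ _ := Finset.card_union_le _ _
      _ ≤ _ := by gcongr; exact Finset.card_union_le _ _
  have tot' : (m : ℝ) ≤ bad.card + (TA.card + TB.card) := by exact_mod_cast tot
  have cbad' : (bad.card : ℝ) ≤ 3 ^ n * B.ncard := by exact_mod_cast cbad
  linarith

end count
section offset

def unitQ (n : ℕ) : Set (Fin n → ℝ) := Set.pi univ fun _ => Ico 0 1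

def zc {n : ℕ} (x : Fin n → ℤ) : Fin n → ℝ := fun l => (x l : ℝ)

lemma measurableSet_unitQ (n : ℕ) : MeasurableSet (unitQ n) :=
  MeasurableSet.univ_pi fun _ => measurableSet_Ico

lemma volume_unitQ (n : ℕ) : volume (unitQ n) = 1 := by
  simp [unitQ, volume_pi_pi]

lemma tiling {n : ℕ} (A : Set (Fin n → ℝ)) (hA : MeasurableSet A) :
    ∫⁻ a in unitQ n, ∑' x : Fin n → ℤ, A.indicator (fun _ => (1 : ℝ≥0∞)) (a + zc x) ≤ volume A := by
  have hQ := measurableSet_unitQ n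
  rw [lintegral_tsum]
  swap
  · intro x
    exact ((measurable_const.indicator hA).comp (measurable_add_const _)).aemeasurable
  have h1 : ∀ x : Fin n → ℤ, ∫⁻ a in unitQ n, A.indicator (fun _ => (1 : ℝ≥0∞)) (a + zc x)
      = volume (A ∩ (fun y => y + (- zc x)) ⁻¹' unitQ n) := by
    intro x
    have : (fun a => A.indicator (fun _ => (1 : ℝ≥0∞)) (a + zc x))
        = ((fun a => a + zc x) ⁻¹' A).indicator (fun _ => 1) := by
      ext a; rfl
    rw [this, lintegral_indicator_const (hA.preimage (measurable_add_const _)), one_mul,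
      Measure.restrict_apply (hA.preimage (measurable_add_const _))]
    rw [← measure_preimage_add_right volume (zc x) (A ∩ (fun y => y + (- zc x)) ⁻¹' unitQ n)]
    congr 1
    ext y
    simp
  simp_rw [h1]
  rw [← measure_iUnion]
  · apply measure_mono
    exact iUnion_subset fun x => inter_subset_left
  · intro x x' hne
    rw [Function.onFun, Set.disjoint_left]
    rintro y ⟨-, hy⟩ ⟨-, hy'⟩
    apply hne
    funext l
    have a1 := hy l (mem_univ l)
    have a2 := hy' l (mem_univ l)
    simp only [Pi.add_apply, Pi.neg_apply, zc, mem_Ico] at a1 a2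
    have b1 : ((x l : ℤ) : ℝ) < (x' l : ℝ) + 1 := by linarith
    have b2 : ((x' l : ℤ) : ℝ) < (x l : ℝ) + 1 := by linarith
    have c1 : x l < x' l + 1 := by exact_mod_cast b1
    have c2 : x' l < x l + 1 := by exact_mod_cast b2
    omega
  · intro x
    exact hA.inter (hQ.preimage (measurable_add_const _))

def ptE {n : ℕ} (δ : ℝ) (y : Fin n → ℝ) : EuclideanSpace ℝ (Fin n) := WithLp.toLp 2 (δ • y)

def blk {n : ℕ} (F : Set (EuclideanSpace ℝ (Fin n))) (δ : ℝ) (a : Fin n → ℝ) :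
    Set ((Fin n → ℤ) × Fin n) :=
  {b | ∃ t ∈ Icc (0:ℝ) 1, ptE δ (a + zc b.1 + Pi.single b.2 t) ∈ F}

lemma coord_le_dist {n : ℕ} (x y : EuclideanSpace ℝ (Fin n)) (l : Fin n) : |x l - y l| ≤ dist x y := by
  have := PiLp.norm_apply_le (x - y) l
  rw [dist_eq_norm]
  simpa using this

lemma box_exists {n : ℕ} (hn : 1 ≤ n) {δ : ℝ} (hδ : 0 < δ) (U : Set (EuclideanSpace ℝ (Fin n)))
    (hU : Metric.ediam U ≤ ENNReal.ofReal δ) (i : Fin n) :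
    ∃ A : Set (Fin n → ℝ), MeasurableSet A ∧
      (∀ y, (∃ t ∈ Icc (0:ℝ) 1, ptE δ (y + Pi.single i t) ∈ U) → y ∈ A) ∧
      volume A ≤ ENNReal.ofReal (3 * (2 / δ) ^ (n - 1)) *
        ⨆ _ : U.Nonempty, Metric.ediam U ^ ((n : ℝ) - 1) := by
  rcases U.eq_empty_or_nonempty with rfl | hne
  · exact ⟨∅, MeasurableSet.empty, by simp, by simp⟩
  obtain ⟨c, hc⟩ := hne
  have hfin : Metric.ediam U ≠ ⊤ := ne_top_of_le_ne_top ENNReal.ofReal_ne_top hU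
  set ρ := (Metric.ediam U).toReal with hρ
  have hρ0 : 0 ≤ ρ := ENNReal.toReal_nonneg
  have hρδ : ρ ≤ δ := by
    have := ENNReal.toReal_mono ENNReal.ofReal_ne_top hU
    rwa [ENNReal.toReal_ofReal hδ.le] at this
  have hdist : ∀ x ∈ U, dist x c ≤ ρ := by
    intro x hx
    rw [dist_edist]
    exact ENNReal.toReal_mono hfin (Metric.edist_le_ediam_of_mem hx hc)
  refine ⟨Set.pi univ fun l => Icc (c l / δ - ρ / δ - (Pi.single i 1 : Fin n → ℝ) l)
    (c l / δ + ρ / δ), MeasurableSet.univ_pi fun _ => measurableSet_Icc, ?_, ?_⟩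
  · rintro y ⟨t, ht, hy⟩ l -
    have h1 := (coord_le_dist _ c l).trans (hdist _ hy)
    simp only [ptE, PiLp.toLp_apply, Pi.smul_apply, Pi.add_apply, smul_eq_mul] at h1
    have h2 := abs_le.1 h1
    have e1 : c l / δ - ρ / δ ≤ y l + (Pi.single i t : Fin n → ℝ) l := by
      rw [← sub_div, div_le_iff₀ hδ]; nlinarith
    have e2 : y l + (Pi.single i t : Fin n → ℝ) l ≤ c l / δ + ρ / δ := by
      rw [← add_div, le_div_iff₀ hδ]; nlinarith
    have e3 : 0 ≤ (Pi.single i t : Fin n → ℝ) l ∧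
        (Pi.single i t : Fin n → ℝ) l ≤ (Pi.single i 1 : Fin n → ℝ) l := by
      by_cases hl : l = i
      · subst hl; simpa using ht
      · simp [hl]
    constructor <;> linarith
  · rw [volume_pi_pi]
    simp only [Real.volume_Icc]
    have e : ∀ l, c l / δ + ρ / δ - (c l / δ - ρ / δ - (Pi.single i 1 : Fin n → ℝ) l)
        = 2 * ρ / δ + (Pi.single i 1 : Fin n → ℝ) l := by intro l; ring
    simp only [e]
    rw [← Finset.mul_prod_erase Finset.univ _ (Finset.mem_univ i)]
    have e2 : ∏ l ∈ Finset.univ.erase i, ENNReal.ofReal (2 * ρ / δ + (Pi.single i 1 : Fin n → ℝ) l)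
        = ENNReal.ofReal (2 * ρ / δ) ^ (n - 1) := by
      rw [Finset.prod_congr rfl (g := fun _ => ENNReal.ofReal (2 * ρ / δ))]
      · simp
      · intro l hl
        simp [Finset.ne_of_mem_erase hl]
    rw [e2]
    have e3 : (⨆ _ : U.Nonempty, Metric.ediam U ^ ((n : ℝ) - 1)) = ENNReal.ofReal (ρ ^ (n - 1)) := by
      rw [iSup_pos ⟨c, hc⟩, ENNReal.ofReal_pow hρ0, hρ, ENNReal.ofReal_toReal hfin,
        ← ENNReal.rpow_natCast, Nat.cast_sub hn, Nat.cast_one]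
    have hq : 0 ≤ 2 * ρ / δ := by positivity
    rw [e3, ← ENNReal.ofReal_pow hq, ← ENNReal.ofReal_mul (by simp; positivity),
      ← ENNReal.ofReal_mul (by positivity)]
    apply ENNReal.ofReal_le_ofReal
    have h3 : 2 * ρ / δ + (Pi.single i 1 : Fin n → ℝ) i ≤ 3 := by
      have : ρ / δ ≤ 1 := (div_le_one hδ).2 hρδ
      simp [mul_div_assoc]; linarith
    calc _ ≤ 3 * (2 * ρ / δ) ^ (n - 1) := by gcongr
      _ = _ := by rw [mul_assoc, ← mul_pow]; congr 2; ring

lemma offset_exists {n : ℕ} (hn : 1 ≤ n) {δ D : ℝ} (hδ : 0 < δ) (hD : 0 < D)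
    (F : Set (EuclideanSpace ℝ (Fin n))) (hF : μH[(n : ℝ) - 1] F < ENNReal.ofReal D) :
    ∃ a ∈ unitQ n, (blk F δ a).Finite ∧
      ((blk F δ a).ncard : ℝ) ≤ n * (3 * (2 / δ) ^ (n - 1)) * D := by
  rw [Measure.hausdorffMeasure_apply] at hF
  have hF1 := lt_of_le_of_lt (le_iSup₂ (f := fun (r : ℝ≥0∞) (_ : 0 < r) =>
    ⨅ (t : ℕ → Set (EuclideanSpace ℝ (Fin n))) (_ : F ⊆ ⋃ n, t n)
      (_ : ∀ n, Metric.ediam (t n) ≤ r), ∑' m, ⨆ _ : (t m).Nonempty,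
        Metric.ediam (t m) ^ ((n : ℝ) - 1)) (ENNReal.ofReal δ) (ENNReal.ofReal_pos.2 hδ)) hF
  simp only [iInf_lt_iff] at hF1
  obtain ⟨t, ht, htd, hts⟩ := hF1
  choose A hAm hA hAv using fun j i => box_exists hn hδ (t j) (htd j) i
  set c : ℝ≥0∞ := ENNReal.ofReal (3 * (2 / δ) ^ (n - 1)) with hc
  set H : (Fin n → ℝ) → ℝ≥0∞ := fun a => ∑' j, ∑' i, ∑' x : Fin n → ℤ,
    (A j i).indicator (fun _ => (1 : ℝ≥0∞)) (a + zc x) with hH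
  have hm : ∀ j i (x : Fin n → ℤ), Measurable fun a : Fin n → ℝ =>
      (A j i).indicator (fun _ => (1 : ℝ≥0∞)) (a + zc x) := fun j i x =>
    (measurable_const.indicator (hAm j i)).comp (measurable_add_const _)
  have hI : ∫⁻ a in unitQ n, H a ≤ n * c * ENNReal.ofReal D := by
    rw [hH, lintegral_tsum (fun j => (Measurable.tsum fun i =>
      Measurable.tsum fun x => hm j i x).aemeasurable)]
    calc _ ≤ ∑' j, n * c * ⨆ _ : (t j).Nonempty, Metric.ediam (t j) ^ ((n : ℝ) - 1) := by
          refine ENNReal.tsum_le_tsum fun j => ?_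
          rw [lintegral_tsum (fun i => (Measurable.tsum fun x => hm j i x).aemeasurable)]
          calc _ ≤ ∑' i : Fin n, c * ⨆ _ : (t j).Nonempty, Metric.ediam (t j) ^ ((n : ℝ) - 1) :=
                ENNReal.tsum_le_tsum fun i => (tiling _ (hAm j i)).trans (hAv j i)
            _ = _ := by rw [tsum_fintype]; simp [mul_assoc]
      _ = n * c * ∑' j, ⨆ _ : (t j).Nonempty, Metric.ediam (t j) ^ ((n : ℝ) - 1) :=
          ENNReal.tsum_mul_left
      _ ≤ _ := by gcongr
  have hne : n * c * ENNReal.ofReal D ≠ ⊤ := by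
    apply ENNReal.mul_ne_top (ENNReal.mul_ne_top (by simp) ENNReal.ofReal_ne_top) ENNReal.ofReal_ne_top
  obtain ⟨a, haQ, ha⟩ := exists_le_setLAverage (μ := volume) (s := unitQ n) (f := H)
    (by rw [volume_unitQ]; simp) (by rw [volume_unitQ]; simp)
    (Measurable.tsum fun j => Measurable.tsum fun i =>
      Measurable.tsum fun x => hm j i x).aemeasurable
  rw [setLAverage_eq, volume_unitQ, div_one] at ha
  have hcnt : ((blk F δ a).encard : ℝ≥0∞) ≤ n * c * ENNReal.ofReal D := by
    refine le_trans ?_ (ha.trans hI)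
    rw [← ENNReal.tsum_set_one, tsum_subtype (blk F δ a) (fun _ => (1:ℝ≥0∞))]
    calc _ ≤ ∑' b : (Fin n → ℤ) × Fin n, ∑' j,
            (A j b.2).indicator (fun _ => (1 : ℝ≥0∞)) (a + zc b.1) := by
          refine ENNReal.tsum_le_tsum fun b => ?_
          by_cases hb : b ∈ blk F δ a
          · obtain ⟨s, hs, hbF⟩ := hb
            obtain ⟨j, hj⟩ := mem_iUnion.1 (ht hbF)
            have := hA j b.2 (a + zc b.1) ⟨s, hs, hj⟩
            refine le_trans ?_ (ENNReal.le_tsum j)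
            rw [indicator_of_mem this]
            exact indicator_le_self' (fun _ _ => zero_le) _
          · rw [indicator_of_notMem hb]; exact zero_le
      _ = H a := by
          rw [ENNReal.tsum_comm]
          simp only [hH]
          congr 1
          ext j
          rw [ENNReal.tsum_prod', ENNReal.tsum_comm]
  have hfin : (blk F δ a).Finite := by
    rw [← encard_ne_top_iff]
    intro h
    rw [h] at hcnt
    simp at hcnt
    exact hne hcnt
  refine ⟨a, haQ, hfin, ?_⟩
  rw [← hfin.cast_ncard_eq] at hcnt
  have := ENNReal.toReal_mono hne hcnt
  simp only [hc, ENNReal.toReal_mul, ENNReal.toReal_natCast, ENNReal.toReal_ofReal hD.le,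
    ENNReal.toReal_ofReal (show 0 ≤ 3 * (2 / δ) ^ (n - 1) by positivity)] at this
  simpa using this

end offset
section curves

def JoinL {n : ℕ} (S : Set (Epc n)) (p q : Epc n) (L : ℝ) : Prop :=
  0 ≤ L ∧ ∃ γ : ℝ → Epc n, LipschitzOnWith 1 γ (Icc 0 L) ∧ γ 0 = p ∧ γ L = q ∧
    MapsTo γ (Icc 0 L) S

variable {n : ℕ} {S : Set (Epc n)}

lemma JoinL.geo {p q : Epc n} {L : ℝ} (h : JoinL S p q L) : geoDist S p q ≤ ENNReal.ofReal L := by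
  obtain ⟨hL, γ, h1, h2, h3, h4⟩ := h
  have hm : MapsTo (fun t : ℝ => L * t) (Icc 0 1) (Icc 0 L) := by
    rintro t ⟨t0, t1⟩
    exact ⟨by positivity, by nlinarith⟩
  have hl : LipschitzOnWith L.toNNReal (fun t : ℝ => L * t) (Icc 0 1) := by
    apply LipschitzOnWith.of_dist_le_mul
    intro x _ y _
    rw [Real.dist_eq, Real.dist_eq, ← mul_sub, abs_mul, abs_of_nonneg hL, Real.coe_toNNReal _ hL]
  have hle : eVariationOn (γ ∘ fun t : ℝ => L * t) (Icc 0 1) ≤ ENNReal.ofReal L := by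
    have a1 := h1.comp_eVariationOn_le hm
    have a2 : eVariationOn (fun t : ℝ => L * t) (Icc 0 1) ≤ ENNReal.ofReal (L * 1 - L * 0) := by
      have := MonotoneOn.eVariationOn_le (f := fun t : ℝ => L * t) (s := Icc 0 1) (a := 0) (b := 1)
        (fun x _ y _ hxy => mul_le_mul_of_nonneg_left hxy hL) (by simp) (by simp)
      simpa using this
    simp at a1 a2
    exact a1.trans a2
  refine le_trans (sInf_le ?_) hle
  refine ⟨γ ∘ fun t : ℝ => L * t, ⟨1 * L.toNNReal, h1.comp hl hm⟩, by simp [h2], by simp [h3],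
    h4.comp hm, rfl⟩

lemma JoinL.trans {p q z : Epc n} {a b : ℝ} (h : JoinL S p q a) (h' : JoinL S q z b) :
    JoinL S p z (a + b) := by
  obtain ⟨ha, γ, h1, h2, h3, h4⟩ := h
  obtain ⟨hb, η, g1, g2, g3, g4⟩ := h'
  have e1 : ∀ t, t ≤ a → (if t ≤ a then γ t else η (t - a)) = γ t := fun t ht => if_pos ht
  have e2 : ∀ t, a ≤ t → (if t ≤ a then γ t else η (t - a)) = η (t - a) := by
    intro t ht
    rcases ht.eq_or_lt with rfl | h
    · simp [h3, g2]
    · rw [if_neg (not_le.2 h)]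
  refine ⟨by positivity, fun t => if t ≤ a then γ t else η (t - a), ?_, ?_, ?_, ?_⟩
  · have d1 : ∀ s t, 0 ≤ s → s ≤ t → t ≤ a → dist (γ s) (γ t) ≤ t - s := by
      intro s t h0 hst hta
      have := h1.dist_le_mul s ⟨h0, hst.trans hta⟩ t ⟨h0.trans hst, hta⟩
      rw [Real.dist_eq, abs_sub_comm, abs_of_nonneg (by linarith)] at this
      simpa using this
    have d2 : ∀ s t, 0 ≤ s → s ≤ t → t ≤ b → dist (η s) (η t) ≤ t - s := by
      intro s t h0 hst hta
      have := g1.dist_le_mul s ⟨h0, hst.trans hta⟩ t ⟨h0.trans hst, hta⟩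
      rw [Real.dist_eq, abs_sub_comm, abs_of_nonneg (by linarith)] at this
      simpa using this
    have key : ∀ s t, 0 ≤ s → s ≤ t → t ≤ a + b →
        dist (if s ≤ a then γ s else η (s - a)) (if t ≤ a then γ t else η (t - a)) ≤ t - s := by
      intro s t h0 hst htb
      rcases le_total t a with hta | hta
      · rw [e1 s (hst.trans hta), e1 t hta]; exact d1 s t h0 hst hta
      · rcases le_total s a with hsa | hsa
        · rw [e1 s hsa, e2 t hta]
          have b1 := d1 s a h0 hsa le_rfl
          have b2 := d2 0 (t - a) le_rfl (by linarith) (by linarith)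
          rw [h3] at b1
          rw [g2] at b2
          have := dist_triangle (γ s) q (η (t - a))
          linarith
        · rw [e2 s hsa, e2 t hta]
          have := d2 (s - a) (t - a) (by linarith) (by linarith) (by linarith)
          linarith
    apply LipschitzOnWith.of_dist_le_mul
    intro s hs t ht
    rw [NNReal.coe_one, one_mul, Real.dist_eq]
    rcases le_total s t with hst | hst
    · rw [abs_sub_comm, abs_of_nonneg (by linarith)]; exact key s t hs.1 hst ht.2
    · rw [dist_comm, abs_of_nonneg (by linarith)]; exact key t s ht.1 hst hs.2
  · exact (e1 0 ha).trans h2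
  · exact (e2 (a + b) (by linarith)).trans (by simpa using g3)
  · intro t ht
    dsimp only
    rcases le_total t a with h | h
    · rw [e1 t h]; exact h4 ⟨ht.1, h⟩
    · rw [e2 t h]; exact g4 ⟨by linarith, by linarith [ht.2]⟩

lemma JoinL.seg {p q : Epc n} {L : ℝ} (hL : 0 < L) (hd : dist p q ≤ L) (hs : segment ℝ p q ⊆ S) :
    JoinL S p q L := by
  refine ⟨hL.le, fun t => AffineMap.lineMap p q (t / L), ?_, by simp, ?_, ?_⟩
  · apply LipschitzOnWith.of_dist_le_mul
    intro s _ t _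
    rw [dist_lineMap_lineMap, NNReal.coe_one, one_mul, Real.dist_eq, ← sub_div, abs_div,
      abs_of_pos hL, Real.dist_eq, div_mul_eq_mul_div, div_le_iff₀ hL]
    gcongr
  · simp [div_self hL.ne']
  · intro t ht
    apply hs
    rw [segment_eq_image_lineMap]
    exact ⟨t / L, ⟨div_nonneg ht.1 hL.le, (div_le_one hL).2 ht.2⟩, rfl⟩

lemma conn_sub {X : Type*} [TopologicalSpace X] {s t : Set X} (hs : IsPreconnected s)
    (hd : Disjoint s (frontier t)) (hne : (s ∩ t).Nonempty) : s ⊆ t := by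
  have hsub : s ⊆ interior t ∪ (closure t)ᶜ := by
    intro x hx
    by_cases h : x ∈ closure t
    · left
      by_contra h'
      exact Set.disjoint_left.1 hd hx ⟨h, h'⟩
    · exact Or.inr h
  refine (hs.subset_left_of_subset_union isOpen_interior isClosed_closure.isOpen_compl ?_ hsub ?_).trans
    interior_subset
  · rw [Set.disjoint_left]
    intro x hx hx'
    exact hx' (subset_closure (interior_subset hx))
  · obtain ⟨x, hx, hxt⟩ := hne
    refine ⟨x, hx, ?_⟩
    rcases hsub hx with h | h
    · exact h
    · exact absurd (subset_closure hxt) h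

lemma dist_le_of_coord (hn : 1 ≤ n) {x y : Epc n} {M : ℝ} (hM : 0 ≤ M) (h : ∀ l, |x l - y l| ≤ M) :
    dist x y ≤ n * M := by
  rw [EuclideanSpace.dist_eq]
  apply Real.sqrt_le_iff.2 ⟨by positivity, ?_⟩
  have h1 : ∑ i, dist (x i) (y i) ^ 2 ≤ ∑ _i : Fin n, M ^ 2 := by
    apply Finset.sum_le_sum
    intro i _
    rw [Real.dist_eq]
    have := h i
    gcongr
  refine h1.trans ?_
  simp only [Finset.sum_const, Finset.card_univ, Fintype.card_fin, nsmul_eq_mul]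
  have : (1:ℝ) ≤ n := by exact_mod_cast hn
  nlinarith [sq_nonneg M, mul_nonneg (sub_nonneg.2 this) (sq_nonneg M)]

end curves

section geom
variable {n : ℕ}

lemma reach_near {B : Set ((Fin n → ℤ) × Fin n)} {x y : Fin n → ℤ} (hxy : ∀ l, |x l - y l| ≤ 1)
    (hB : ∀ z i, (∀ l, |x l - z l| ≤ 1) → (z, i) ∉ B) : (latG B).Reachable x y := by
  classical
  have key : ∀ s : Finset (Fin n), (latG B).Reachable x (s.piecewise y x) := by
    intro s
    induction s using Finset.induction_on with
    | empty => simp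
    | insert i s hi ih =>
      refine ih.trans ?_
      have bd : ∀ t : Finset (Fin n), ∀ l, |x l - (t.piecewise y x) l| ≤ 1 := by
        intro t l
        by_cases hl : l ∈ t
        · rw [Finset.piecewise_eq_of_mem _ _ _ hl]; exact hxy l
        · rw [Finset.piecewise_eq_of_notMem _ _ _ hl]; simp
      have hi1 : (insert i s).piecewise y x = Function.update (s.piecewise y x) i (y i) :=
        Finset.piecewise_insert _ _ _ _
      have hsi : s.piecewise y x i = x i := Finset.piecewise_eq_of_notMem _ _ _ hi
      have h3 : y i = x i ∨ y i = x i + 1 ∨ x i = y i + 1 := by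
        have := abs_le.1 (hxy i); omega
      rcases h3 with h | h | h
      · rw [hi1, h, ← hsi, Function.update_eq_self]
      · apply SimpleGraph.Adj.reachable
        refine ⟨i, Or.inl ⟨?_, hB _ i (bd s)⟩⟩
        rw [hi1]
        ext l
        by_cases hl : l = i
        · subst hl; simp [hsi, h]
        · simp [hl]
      · apply SimpleGraph.Adj.reachable
        refine ⟨i, Or.inr ⟨?_, hB _ i (bd _)⟩⟩
        rw [hi1]
        ext l
        by_cases hl : l = i
        · subst hl; simp [hsi, h]
        · simp [hl]
  have := key Finset.univ
  rwa [Finset.piecewise_univ] at this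

def lpt (δ : ℝ) (a : Fin n → ℝ) (x : Fin n → ℤ) : Epc n := ptE δ (a + zc x)

lemma zc_add_single (x : Fin n → ℤ) (i : Fin n) :
    zc (x + Pi.single i 1) = zc x + Pi.single i 1 := by
  ext l
  by_cases hl : l = i
  · subst hl; simp [zc]
  · simp [zc, hl]

lemma seg_mem {δ : ℝ} {a : Fin n → ℝ} {x : Fin n → ℤ} {i : Fin n} {w : Epc n}
    (hw : w ∈ segment ℝ (lpt δ a x) (lpt δ a (x + Pi.single i 1))) :
    ∃ t ∈ Icc (0:ℝ) 1, w = ptE δ (a + zc x + Pi.single i t) := by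
  rw [segment_eq_image'] at hw
  obtain ⟨t, ht, rfl⟩ := hw
  refine ⟨t, ht, ?_⟩
  ext l
  simp only [lpt, ptE, zc_add_single]
  by_cases hl : l = i
  · subst hl; simp; ring
  · simp [hl]; ring

lemma edge_seg {δ : ℝ} {a : Fin n → ℝ} {x : Fin n → ℤ} {i : Fin n} {Wt : Set (Epc n)}
    (hb : (x, i) ∉ blk (frontier Wt) δ a)
    (hx : lpt δ a x ∈ Wt ∨ lpt δ a (x + Pi.single i 1) ∈ Wt) :
    segment ℝ (lpt δ a x) (lpt δ a (x + Pi.single i 1)) ⊆ Wt := by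
  apply conn_sub (convex_segment _ _).isPreconnected
  · rw [Set.disjoint_left]
    intro w hw hF
    obtain ⟨t, ht, rfl⟩ := seg_mem hw
    exact hb ⟨t, ht, hF⟩
  · rcases hx with h | h
    · exact ⟨_, left_mem_segment _ _ _, h⟩
    · exact ⟨_, right_mem_segment _ _ _, h⟩

lemma lpt_dist {δ : ℝ} (hδ : 0 < δ) {a : Fin n → ℝ} {x : Fin n → ℤ} {i : Fin n} :
    dist (lpt δ a x) (lpt δ a (x + Pi.single i 1)) = δ := by
  rw [dist_eq_norm]
  have : lpt δ a x - lpt δ a (x + Pi.single i 1) = EuclideanSpace.single i (-δ) := by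
    ext l
    simp only [lpt, ptE, zc_add_single]
    by_cases hl : l = i
    · subst hl; simp
    · simp [hl]
  rw [this, EuclideanSpace.norm_single]
  simp [abs_of_pos hδ]

lemma walk_join {δ : ℝ} (hδ : 0 < δ) {a : Fin n → ℝ} {Wt : Set (Epc n)} {x y : Fin n → ℤ}
    (p : (latG (blk (frontier Wt) δ a)).Walk x y) (hx : lpt δ a x ∈ Wt) :
    lpt δ a y ∈ Wt ∧ JoinL Wt (lpt δ a x) (lpt δ a y) (p.length * δ) := by
  induction p with
  | nil =>
    refine ⟨hx, ?_⟩
    simp only [SimpleGraph.Walk.length_nil, Nat.cast_zero, zero_mul]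
    exact ⟨le_rfl, fun _ => _, (LipschitzWith.const' _).lipschitzOnWith, rfl, rfl, fun _ _ => hx⟩
  | @cons x z y h p ih =>
    have hs : segment ℝ (lpt δ a x) (lpt δ a z) ⊆ Wt ∧ dist (lpt δ a x) (lpt δ a z) = δ := by
      obtain ⟨i, ⟨rfl, hb⟩ | ⟨rfl, hb⟩⟩ := h
      · exact ⟨edge_seg hb (Or.inl hx), lpt_dist hδ⟩
      · rw [segment_symm, dist_comm]
        exact ⟨edge_seg hb (Or.inr hx), lpt_dist hδ⟩
    obtain ⟨h1, h2⟩ := ih (hs.1 (right_mem_segment _ _ _))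
    refine ⟨h1, ?_⟩
    have := (JoinL.seg hδ hs.2.le hs.1).trans h2
    convert this using 1
    simp; ring

def vtx (δ : ℝ) (a : Fin n → ℝ) (p : Epc n) : Fin n → ℤ := fun l => ⌊p l / δ - a l⌋

lemma vtx_bd (δ : ℝ) (a : Fin n → ℝ) (p : Epc n) (l : Fin n) :
    0 ≤ p l / δ - (a l + vtx δ a p l) ∧ p l / δ - (a l + vtx δ a p l) ≤ 1 := by
  unfold vtx
  have h1 := Int.floor_le (p l / δ - a l)
  have h2 := Int.lt_floor_add_one (p l / δ - a l)
  constructor <;> linarith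

lemma near_dist (hn : 1 ≤ n) {δ : ℝ} (hδ : 0 < δ) (p : Epc n) (y : Fin n → ℝ) {M : ℝ} (hM : 0 ≤ M)
    (h : ∀ l, |p l / δ - y l| ≤ M) : dist p (ptE δ y) ≤ n * (δ * M) := by
  apply dist_le_of_coord hn (by positivity)
  intro l
  have : p l - (ptE δ y) l = δ * (p l / δ - y l) := by
    simp only [ptE, PiLp.toLp_apply, Pi.smul_apply, smul_eq_mul]
    field_simp
  rw [this, abs_mul, abs_of_pos hδ]
  exact mul_le_mul_of_nonneg_left (h l) hδ.le

theorem main_n (hn : 2 ≤ n) {δ D : ℝ} (hδ : 0 < δ) (hδ1 : δ ≤ 1) (hD : 0 < D) {Wt W : Set (Epc n)}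
    (hWt : ∀ x ∈ Wt, ∀ i, x i ∈ Ioo (0:ℝ) 1) (hWc : IsPreconnected W)
    (hW : ∀ p ∈ W, p ∈ Wt ∧ 4 * n * δ ≤ Metric.infDist p (frontier Wt))
    (hF : μH[(n : ℝ) - 1] (frontier Wt) < ENNReal.ofReal D) {p q : Epc n} (hp : p ∈ W) (hq : q ∈ W) :
    geoDist Wt p q ≤ ENNReal.ofReal
      (2 * n + 2 + 2 * (3 ^ n * (n * 3) * D + 6) * (2 / δ) ^ (n - 2)) := by
  have hn1 : 1 ≤ n := by omega
  have hnpos : (0:ℝ) < n := by exact_mod_cast hn1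
  obtain ⟨a, haQ, hfin, hcard⟩ := offset_exists hn1 hδ hD (frontier Wt) hF
  set B := blk (frontier Wt) δ a with hB
  have hball : ∀ p ∈ W, Metric.ball p (4 * n * δ) ⊆ Wt := by
    intro p hp
    apply conn_sub (convex_ball _ _).isPreconnected
    · exact (Metric.disjoint_ball_infDist (x := p)).mono_left
        (Metric.ball_subset_ball (hW p hp).2)
    · exact ⟨p, Metric.mem_ball_self (by positivity), (hW p hp).1⟩
  have hballF : ∀ p ∈ W, ∀ w, dist p w < 4 * n * δ → w ∉ frontier Wt := by
    intro p hp w hw hF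
    have := Metric.infDist_le_dist_of_mem (x := p) hF
    linarith [(hW p hp).2]
  have unb : ∀ p ∈ W, ∀ z i, (∀ l, |vtx δ a p l - z l| ≤ 1) → (z, i) ∉ B := by
    rintro p hp z i hz ⟨t, ht, hmem⟩
    refine hballF p hp _ ?_ hmem
    refine lt_of_le_of_lt (near_dist hn1 hδ p _ (M := 3) (by norm_num) ?_) ?_
    · intro l
      have h1 := vtx_bd δ a p l
      have h2 : |(vtx δ a p l : ℝ) - z l| ≤ 1 := by exact_mod_cast hz l
      have h2' := abs_le.1 h2
      have h3 : 0 ≤ (Pi.single i t : Fin n → ℝ) l ∧ (Pi.single i t : Fin n → ℝ) l ≤ 1 := by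
        by_cases hl : l = i
        · subst hl; simpa using ht
        · simp [hl]
      simp only [Pi.add_apply, zc]
      rw [abs_le]
      constructor <;> linarith
    · nlinarith [mul_pos hnpos hδ]
  have reach : (latG B).Reachable (vtx δ a p) (vtx δ a q) := by
    refine hWc.induction₂ (fun p q => (latG B).Reachable (vtx δ a p) (vtx δ a q)) ?_ ?_ ?_ hp hq
    · intro x hx
      filter_upwards [mem_nhdsWithin_of_mem_nhds (Metric.ball_mem_nhds x hδ)] with y hy
      apply reach_near _ (unb x hx)
      intro l
      have h1 := coord_le_dist y x l
      have h2 : |y l - x l| < δ := lt_of_le_of_lt h1 hy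
      have h3 : |y l / δ - x l / δ| < 1 := by
        rw [← sub_div, abs_div, abs_of_pos hδ, div_lt_one hδ]; exact h2
      have h3' := abs_lt.1 h3
      have e1 := vtx_bd δ a x l
      have f1 := Int.lt_floor_add_one (x l / δ - a l)
      have f2 := Int.lt_floor_add_one (y l / δ - a l)
      have f3 := Int.floor_le (x l / δ - a l)
      have f4 := Int.floor_le (y l / δ - a l)
      have g1 : ((⌊x l / δ - a l⌋ : ℤ) : ℝ) < ⌊y l / δ - a l⌋ + 2 := by linarith
      have g2 : ((⌊y l / δ - a l⌋ : ℤ) : ℝ) < ⌊x l / δ - a l⌋ + 2 := by linarith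
      have k1 : ⌊x l / δ - a l⌋ < ⌊y l / δ - a l⌋ + 2 := by exact_mod_cast g1
      have k2 : ⌊y l / δ - a l⌋ < ⌊x l / δ - a l⌋ + 2 := by exact_mod_cast g2
      unfold vtx
      rw [abs_le]
      constructor <;> omega
    · intro x y z _ _ _ h1 h2; exact h1.trans h2
    · intro x y _ _ h; exact h.symm
  have hvd : ∀ p, dist p (lpt δ a (vtx δ a p)) ≤ n * δ := by
    intro p
    have := near_dist hn1 hδ p (a + zc (vtx δ a p)) (M := 1) (by norm_num) ?_
    · simpa [lpt] using this
    · intro l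
      have := vtx_bd δ a p l
      simp only [Pi.add_apply, zc]
      rw [abs_le]
      constructor <;> linarith
  have hvs : ∀ p ∈ W, segment ℝ p (lpt δ a (vtx δ a p)) ⊆ Wt := by
    intro p hp
    refine subset_trans ?_ (hball p hp)
    apply (convex_ball p (4 * n * δ)).segment_subset (Metric.mem_ball_self (by positivity))
    rw [Metric.mem_ball, dist_comm]
    exact lt_of_le_of_lt (hvd p) (by nlinarith [mul_pos hnpos hδ])
  have hu : lpt δ a (vtx δ a p) ∈ Wt := hvs p hp (right_mem_segment _ _ _)
  set N := ⌈1 / δ⌉₊ with hNdef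
  have hbox : ∀ x, (latG B).Reachable (vtx δ a p) x → ∀ i, 0 ≤ x i ∧ x i < N := by
    rintro x ⟨w⟩ i
    have hx := hWt _ (walk_join hδ w hu).1 i
    simp only [lpt, ptE, PiLp.toLp_apply, Pi.smul_apply, Pi.add_apply, smul_eq_mul, zc] at hx
    have ha := haQ i (mem_univ i)
    have h1 : 0 < a i + x i := pos_of_mul_pos_right hx.1 hδ.le
    have h2 : a i + x i < 1 / δ := by rw [lt_div_iff₀ hδ]; linarith [hx.2]
    have h3 : 1 / δ ≤ (N : ℝ) := Nat.le_ceil _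
    have h4 : (-1 : ℝ) < x i := by linarith [ha.2]
    have h5 : (x i : ℝ) < N := by linarith [ha.1]
    have h6 : -1 < x i := by exact_mod_cast h4
    have h7 : x i < N := by exact_mod_cast h5
    omega
  have hij : (⟨0, by omega⟩ : Fin n) ≠ ⟨1, by omega⟩ := by simp
  have hdist := dist_bound hfin hij N hbox reach
  obtain ⟨w, hw⟩ := reach.exists_walk_length_eq_dist
  have j1 : JoinL Wt p (lpt δ a (vtx δ a p)) (n * δ) :=
    JoinL.seg (by positivity) (hvd p) (hvs p hp)
  have j3 : JoinL Wt (lpt δ a (vtx δ a q)) q (n * δ) :=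
    JoinL.seg (by positivity) (by rw [dist_comm]; exact hvd q)
      (by rw [segment_symm]; exact hvs q hq)
  have j := ((j1.trans (walk_join hδ w hu).2).trans j3).geo
  refine j.trans (ENNReal.ofReal_le_ofReal ?_)
  rw [hw]
  set T := (2 / δ) with hT
  have hT1 : 1 ≤ T := by rw [hT, le_div_iff₀ hδ]; linarith
  have hNT : (N : ℝ) ≤ T := by
    have h1 := (Nat.ceil_lt_add_one (show 0 ≤ 1 / δ by positivity)).le
    have h2 : 1 ≤ 1 / δ := by rw [le_div_iff₀ hδ]; linarith
    have h3 : T = 1 / δ + 1 / δ := by rw [hT]; ring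
    rw [h3]; linarith
  have hsq : √((N ^ n : ℕ) : ℝ) ≤ T ^ (n - 1) := by
    apply Real.sqrt_le_iff.2 ⟨by positivity, ?_⟩
    push_cast
    calc (N : ℝ) ^ n ≤ T ^ n := by gcongr
      _ ≤ T ^ ((n - 1) * 2) := pow_le_pow_right₀ hT1 (by omega)
      _ = _ := pow_mul _ _ _
  have hpw : δ * T ^ (n - 1) = 2 * T ^ (n - 2) := by
    have : n - 1 = (n - 2) + 1 := by omega
    rw [this, pow_succ, hT]
    field_simp
  have hm : ((latG B).dist (vtx δ a p) (vtx δ a q) : ℝ) ≤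
      (3 ^ n * (n * 3) * D + 6) * T ^ (n - 1) + 2 := by
    have : (3:ℝ) ^ n * B.ncard ≤ 3 ^ n * (n * (3 * T ^ (n - 1)) * D) := by gcongr
    nlinarith
  calc n * δ + (latG B).dist (vtx δ a p) (vtx δ a q) * δ + n * δ
      ≤ n * δ + ((3 ^ n * (n * 3) * D + 6) * T ^ (n - 1) + 2) * δ + n * δ := by gcongr
    _ = (2 * n + 2) * δ + (3 ^ n * (n * 3) * D + 6) * (δ * T ^ (n - 1)) := by ring
    _ = (2 * n + 2) * δ + (3 ^ n * (n * 3) * D + 6) * (2 * T ^ (n - 2)) := by rw [hpw]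
    _ ≤ (2 * n + 2) * 1 + (3 ^ n * (n * 3) * D + 6) * (2 * T ^ (n - 2)) := by gcongr
    _ = _ := by ring

lemma main_1 {W Wt : Set (Epc 1)} (hWt : ∀ x ∈ Wt, ∀ i, x i ∈ Ioo (0:ℝ) 1)
    (hWc : IsPreconnected W) (hW : W ⊆ Wt) {p q : Epc 1} (hp : p ∈ W) (hq : q ∈ W) :
    geoDist Wt p q ≤ ENNReal.ofReal 1 := by
  apply JoinL.geo
  apply JoinL.seg one_pos
  · have := dist_le_of_coord (n := 1) le_rfl (x := p) (y := q) (M := 1) (by norm_num) ?_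
    · simpa [lpt] using this
    · intro l
      have h1 := hWt p (hW hp) l
      have h2 := hWt q (hW hq) l
      rw [abs_le]
      constructor <;> linarith [h1.1, h1.2, h2.1, h2.2]
  · refine subset_trans ?_ hW
    have hc : Continuous fun x : Epc 1 => x 0 := by fun_prop
    have him : OrdConnected ((fun x : Epc 1 => x 0) '' W) :=
      (hWc.image _ hc.continuousOn).ordConnected
    intro w hw
    have hwm : w 0 ∈ (fun x : Epc 1 => x 0) '' W := by
      have hcv := him.convex (𝕜 := ℝ)
      obtain ⟨s, t, hs, ht, hst, rfl⟩ := hw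
      have := hcv ⟨p, hp, rfl⟩ ⟨q, hq, rfl⟩ hs ht hst
      simpa using this
    obtain ⟨z, hz, hzw⟩ := hwm
    have : z = w := by
      ext l
      have : l = 0 := Subsingleton.elim _ _
      subst this; exact hzw
    exact this ▸ hz

end geom

theorem geodesic_distance_bound
    (d : ℕ) (hd : 2 ≤ d) (D D' : ℝ) (hD : 0 < D) (hD' : 0 < D') :
    ∃ C > (0 : ℝ), ∃ ε₀ > (0 : ℝ), ∀ ε : ℝ, 0 < ε → ε < ε₀ →
      ∀ Wt W : Set (Epc (d - 1)), Admissible d D D' ε Wt W →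
        ∀ p ∈ W, ∀ q ∈ W,
          geoDist Wt p q ≤ ENNReal.ofReal (C * (1 + ε ^ ((sExp d - 1) * ((d : ℝ) - 3)))) := by
  obtain ⟨n, rfl⟩ : ∃ n, d = n + 1 := ⟨d - 1, by omega⟩
  have hcore : ∀ (ε : ℝ) (Wt W : Set (Epc (n + 1 - 1))), Admissible (n + 1) D D' ε Wt W →
      W ⊆ coreSet (n + 1) D' ε Wt := by
    rintro ε Wt W ⟨-, ⟨x, -, rfl, -⟩, -⟩
    exact connectedComponentIn_subset _ _
  rcases (show n = 1 ∨ 2 ≤ n by omega) with rfl | hn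
  · refine ⟨1, one_pos, 1, one_pos, ?_⟩
    intro ε hε _ Wt W hA p hp q hq
    refine (main_1 (W := W) (Wt := Wt) hA.1.1 hA.2.2.2.1.isPreconnected
      (fun x hx => (hcore ε Wt W hA hx).1) hp hq).trans (ENNReal.ofReal_le_ofReal ?_)
    have := Real.rpow_nonneg hε.le ((sExp (1 + 1) - 1) * (((1 + 1 : ℕ) : ℝ) - 3))
    linarith
  · have hn0 : (0:ℝ) < n := by exact_mod_cast (by omega : 0 < n)
    set K : ℝ := 2 * (3 ^ n * (n * 3) * D + 6) with hK
    have hK0 : 0 < K := by positivity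
    set σ : ℝ := 1 - sExp (n + 1) with hσ
    have hσ0 : 0 < σ := by
      rw [hσ, sExp]
      push_cast
      rw [sub_pos, div_lt_one (by positivity)]
      linarith
    refine ⟨2 * n + 2 + K * (8 * n / D') ^ (n - 2), by positivity, (4 * n / D') ^ (1 / σ),
      by positivity, ?_⟩
    intro ε hε hεε Wt W hA p hp q hq
    set e := ε ^ σ with he
    have he0 : 0 < e := Real.rpow_pos_of_pos hε _
    have he1 : e ≤ 4 * n / D' := by
      have := Real.rpow_le_rpow hε.le hεε.le hσ0.le
      rwa [← Real.rpow_mul (by positivity), one_div_mul_cancel hσ0.ne', Real.rpow_one] at this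
    have hδ : 0 < D' * e / (4 * n) := by positivity
    have hδ1 : D' * e / (4 * n) ≤ 1 := by
      rw [div_le_one (by positivity)]
      rw [le_div_iff₀ hD'] at he1
      linarith
    have hF := hA.1.2.2.2.2
    rw [show (((n + 1 : ℕ) : ℝ) - 2) = (n : ℝ) - 1 by push_cast; ring] at hF
    have hmain := main_n (n := n) hn hδ hδ1 hD (Wt := Wt) (W := W) hA.1.1
      hA.2.2.2.1.isPreconnected ?_ hF hp hq
    · refine hmain.trans (ENNReal.ofReal_le_ofReal ?_)
      have hexp : ε ^ ((sExp (n + 1) - 1) * (((n + 1 : ℕ) : ℝ) - 3)) = (e⁻¹) ^ (n - 2) := by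
        rw [he, ← Real.rpow_neg hε.le, ← Real.rpow_natCast, ← Real.rpow_mul hε.le,
          Nat.cast_sub hn]
        congr 1
        rw [hσ]
        push_cast
        ring
      rw [hexp]
      have h2 : (2 / (D' * e / (4 * n))) ^ (n - 2) = (8 * n / D') ^ (n - 2) * (e⁻¹) ^ (n - 2) := by
        rw [← mul_pow]
        congr 1
        field_simp
        ring
      rw [h2]
      have h3 : 0 ≤ (e⁻¹) ^ (n - 2) := by positivity
      have h4 : 0 ≤ K * (8 * n / D') ^ (n - 2) := by positivity
      nlinarith [mul_nonneg (by positivity : (0:ℝ) ≤ 2 * n + 2) h3]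
    · intro x hx
      have hxc := hcore ε Wt W hA hx
      refine ⟨hxc.1, ?_⟩
      have : 4 * n * (D' * e / (4 * n)) = D' * e := by field_simp
      rw [this]
      exact hxc.2.le

end Cleavage
end
end
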